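/- Let D > 0 and 0 ≤ a ≤ D. For D₁ ≥ D₂ ≥ 0 with D₁ + D₂ = D, let V(D₁, D₂) denote the optimal two-dimensional McDiarmid bound: V := 0 if D₁ + D₂ ≤ a; V := (D₁ + D₂ − a)²/(4 D₁ D₂) if |D₁ − D₂| ≤ a ≤ D₁ + D₂ (this branch requires D₂ > 0); V := 1 − a/max(D₁, D₂) if 0 ≤ a ≤ |D₁ − D₂|. Then for every such pair (D₁, D₂): (1 − a/D)² ≤ V(D₁, D₂) ≤ 1 − a/D; the minimum value (1 − a/D)² is attained at the diagonal D₁ = D₂ = D/2, and the maximum value 1 − a/D is attained at D₁ = D, D₂ = 0. -/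

import Mathlib

/-!
If `a = D` every value involved is `0`. Let `a < D = D₁ + D₂` and `δ = D₁ - D₂ ≥ 0`, so that
`4 D₁ D₂ = D² - δ²`. If `δ ≤ a`, then `V = (D - a)² / (D² - δ²)`: the lower bound is
`D² - δ² ≤ D²`, with equality on the diagonal, and the upper bound is `δ² ≤ a² ≤ a D`.
If `a < δ`, then `V = 1 - a / D₁`: the upper bound is `D₁ ≤ D`, with equality at `D₂ = 0`,
and the lower bound amounts to `D² ≤ D₁ (2 D - a)`, which follows from
`D₁ (2 D - δ) - D² = D₂ δ ≥ 0`.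
-/

/-- The optimal two-dimensional McDiarmid bound as a function of `(D₁, D₂)`. -/
noncomputable def mcdBound2 (a D₁ D₂ : ℝ) : ℝ :=
  if D₁ + D₂ ≤ a then 0
  else if |D₁ - D₂| ≤ a then (D₁ + D₂ - a) ^ 2 / (4 * D₁ * D₂)
  else 1 - a / max D₁ D₂

/-- **Extremal behaviour of the optimal two-dimensional McDiarmid bound** over the
simplex `{(D₁, D₂) : D₁ ≥ D₂ ≥ 0, D₁ + D₂ = D}`: for every such pair,
`(1 − a/D)² ≤ V(D₁, D₂) ≤ 1 − a/D`; the minimum `(1 − a/D)²` is attained on the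
diagonal `D₁ = D₂ = D/2` and the maximum `1 − a/D` at `(D₁, D₂) = (D, 0)`. -/
theorem stmt19 (D a : ℝ) (hD : 0 < D) (ha : 0 ≤ a) (haD : a ≤ D) :
    (∀ D₁ D₂ : ℝ, 0 ≤ D₂ → D₂ ≤ D₁ → D₁ + D₂ = D →
      (1 - a / D) ^ 2 ≤ mcdBound2 a D₁ D₂ ∧ mcdBound2 a D₁ D₂ ≤ 1 - a / D) ∧
    mcdBound2 a (D / 2) (D / 2) = (1 - a / D) ^ 2 ∧
    mcdBound2 a D 0 = 1 - a / D := by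
  have hx : 1 - a / D = (D - a) / D := by field_simp
  refine ⟨fun D₁ D₂ h0 h1 hs => ?_, ?_, ?_⟩
  · unfold mcdBound2
    rw [hs]
    split_ifs with hc1 hc2
    · obtain rfl : a = D := le_antisymm haD hc1
      simp [div_self hD.ne']
    · push Not at hc1
      rw [abs_of_nonneg (by linarith)] at hc2
      have h2 : 0 < D₂ := by linarith
      have h3 : 0 < D₁ := by linarith
      have hp : 0 < 4 * D₁ * D₂ := by positivity
      have hδ : 4 * D₁ * D₂ = D ^ 2 - (D₁ - D₂) ^ 2 := by rw [← hs]; ring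
      rw [hx]
      constructor
      · rw [div_pow]
        apply div_le_div_of_nonneg_left (sq_nonneg _) hp
        nlinarith [sq_nonneg (D₁ - D₂)]
      · rw [div_le_div_iff₀ hp hD]
        have hk : D * (D - a) ≤ 4 * D₁ * D₂ := by nlinarith
        nlinarith [mul_le_mul_of_nonneg_left hk (sub_nonneg.2 haD)]
    · push Not at hc1 hc2
      rw [abs_of_nonneg (by linarith)] at hc2
      have h3 : 0 < D₁ := by linarith
      rw [max_eq_left h1]
      constructor
      · have hy : 1 - a / D₁ = (D₁ - a) / D₁ := by field_simp
        rw [hx, hy, div_pow, div_le_div_iff₀ (by positivity) h3]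
        have hk : D ^ 2 ≤ D₁ * (2 * D - a) := by
          subst hs
          nlinarith [mul_nonneg h0 (sub_nonneg.2 h1), mul_pos h3 (sub_pos.2 hc2)]
        nlinarith [mul_le_mul_of_nonneg_left hk ha]
      · have : a / D ≤ a / D₁ := div_le_div_of_nonneg_left ha h3 (by linarith)
        linarith
  · unfold mcdBound2
    rw [add_halves, sub_self, abs_zero, if_pos ha]
    split_ifs with hc
    · obtain rfl : a = D := le_antisymm haD hc
      simp [div_self hD.ne']
    · field_simp
      ring
  · unfold mcdBound2
    rw [add_zero, sub_zero, abs_of_pos hD, max_eq_left hD.le]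
    split_ifs with hc
    · obtain rfl : a = D := le_antisymm haD hc
      simp [div_self hD.ne']
    · rfl
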